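/- For every t > 0, the principal value integral of (p/sin p) e^{−t p²} over ℝ, with singularities at the nonzero multiples of π, satisfies the identity (1/(2π)) · p.v. ∫_ℝ (p/ sin p) exp(−t p²) dp = (4π)^{−1/2} t^{−3/2} Σ_{k=0}^{∞} (2k+1) exp(−(2k+1)²/(4t)), and the series on the right converges absolutely. (At p = 0 the integrand extends continuously with value 1.) -/

import Mathlib

open scoped Topology
open MeasureTheory Filter

/-!
Put `f p = p * exp (-t * p ^ 2)`. Excising the origin as well changes the cut-off integral of
`f / sin` by `o(1)` and makes its domain `2π`-periodic, so that the integral unfolds to one of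
`K / sin` over a period, where `K x = ∑ₙ f (x + 2πn)`. By Poisson summation `K` is a sine series
`∑ₙ bₙ sin (n x)` with `∑ n |bₙ| < ∞`. As `|sin (n x)| ≤ n |sin x|`, the quotient `K / sin` is
bounded: the singularities cancel between the translates, and the cut-off can be removed by
dominated convergence. Integrating term by term, `sin (n x) / sin x` contributes `2π` for odd `n`
and `0` for even `n`.
-/

open Real Set Function HurwitzZeta

section Integration

variable {E : Type*} [NormedAddCommGroup E] [NormedSpace ℝ E]

theorem integral_eq_intervalIntegral_tsum_add_int_mul {f : ℝ → E} {T : ℝ}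
    (hT : 0 < T) (hf : Integrable f) :
    ∫ x, f x = ∫ x in 0..T, ∑' n : ℤ, f (x + n * T) := by
  set g : ℝ → E := fun u ↦ f (T * u)
  have hg_int : Integrable g := hf.comp_mul_left' hT.ne'
  have unfold_unit : ∫ u, g u = ∫ u in 0..1, ∑' n : ℤ, g (u + n) := by
    have summable_norm := hg_int.norm.hasSum_intervalIntegral_comp_add_int.summable
    have hasSum_int := hg_int.hasSum_intervalIntegral_comp_add_int
    simp only [intervalIntegral.integral_of_le zero_le_one] at summable_norm hasSum_int ⊢
    exact hasSum_int.unique <| hasSum_integral_of_summable_integral_norm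
      (fun n ↦ (hg_int.comp_add_right (n : ℝ)).integrableOn) summable_norm
  calc ∫ x, f x
      = T • ∫ u, g u := by
        rw [Measure.integral_comp_mul_left f, abs_of_pos (inv_pos.2 hT),
          smul_inv_smul₀ hT.ne']
    _ = T • ∫ u in 0..1, ∑' n : ℤ, f (T * u + n * T) := by
        rw [unfold_unit]
        simp only [g, mul_add, mul_comm T (Int.cast _)]
    _ = ∫ x in 0..T, ∑' n : ℤ, f (x + n * T) := by
        rw [intervalIntegral.smul_integral_comp_mul_left (fun x ↦ ∑' n : ℤ, f (x + n * T)),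
          mul_zero, mul_one]

theorem tendsto_setIntegral_ball_nhdsGT_zero {X : Type*} [MetricSpace X] [MeasurableSpace X]
    [OpensMeasurableSpace X] {μ : Measure X} [IsLocallyFiniteMeasure μ] [NullSingletonClass μ]
    {f : X → E} {a : X} (hf : IntegrableAtFilter f (𝓝 a) μ) :
    Tendsto (fun δ : ℝ ↦ ∫ x in Metric.ball a δ, f x ∂μ) (𝓝[>] 0) (𝓝 0) := by
  obtain ⟨s, hs, hfs⟩ := hf
  have tendsto_measure_ball : Tendsto (fun δ ↦ μ (Metric.ball a δ)) (𝓝[>] 0) (𝓝 0) := by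
    obtain ⟨u, hu, hμu⟩ := μ.finiteAt_nhds a
    obtain ⟨R, hR, hRu⟩ := Metric.mem_nhds_iff.1 hu
    have finite_thickening : μ (Metric.thickening R {a}) ≠ ⊤ := by
      rw [Metric.thickening_singleton]
      exact measure_ne_top_of_subset hRu hμu.ne
    simpa only [Metric.thickening_singleton, measure_singleton] using
      tendsto_measure_thickening_of_isClosed ⟨R, hR, finite_thickening⟩ isClosed_singleton
  refine (hfs.tendsto_setIntegral_nhds_zero <| tendsto_of_tendsto_of_tendsto_of_le_of_le
    tendsto_const_nhds tendsto_measure_ball (fun _ ↦ zero_le) fun _ ↦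
      Measure.restrict_apply_le _ _).congr' ?_
  obtain ⟨r, hr, hrs⟩ := Metric.mem_nhds_iff.1 hs
  filter_upwards [Ioo_mem_nhdsGT hr] with δ hδ
  rw [Measure.restrict_restrict Metric.isOpen_ball.measurableSet,
    inter_eq_left.2 ((Metric.ball_subset_ball hδ.2.le).trans hrs)]

end Integration

section Sine

theorem abs_sin_nat_mul_le (n : ℕ) (x : ℝ) : |sin (n * x)| ≤ n * |sin x| := by
  induction n with
  | zero => simp
  | succ n ih =>
    calc |sin ((n + 1 : ℕ) * x)|
        = |sin (n * x) * cos x + cos (n * x) * sin x| := by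
          rw [← sin_add]; push_cast; ring_nf
      _ ≤ |sin (n * x)| * |cos x| + |cos (n * x)| * |sin x| := by
          simpa only [abs_mul] using abs_add_le (sin (n * x) * cos x) (cos (n * x) * sin x)
      _ ≤ n * |sin x| * 1 + 1 * |sin x| := by
          gcongr
          exacts [abs_cos_le_one _, abs_cos_le_one _]
      _ = (n + 1 : ℕ) * |sin x| := by push_cast; ring

theorem abs_mul_sin_nat_mul_le (c : ℝ) (n : ℕ) (x : ℝ) :
    |c * sin (n * x)| ≤ n * |c| * |sin x| := by
  calc |c * sin (n * x)| = |c| * |sin (n * x)| := abs_mul _ _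
    _ ≤ |c| * (n * |sin x|) := by gcongr; exact abs_sin_nat_mul_le n x
    _ = n * |c| * |sin x| := by ring

theorem abs_sin_nat_mul_div_sin_le (n : ℕ) (x : ℝ) : |sin (n * x) / sin x| ≤ n := by
  rw [abs_div]
  exact div_le_of_le_mul₀ (abs_nonneg _) n.cast_nonneg (abs_sin_nat_mul_le n x)

theorem ae_sin_ne_zero : ∀ᵐ x : ℝ, sin x ≠ 0 := by
  have zeros_countable : {x : ℝ | sin x = 0}.Countable :=
    (countable_range fun n : ℤ ↦ (n : ℝ) * π).mono fun _ hx ↦ sin_eq_zero_iff.1 hx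
  filter_upwards [zeros_countable.ae_notMem volume] with x hx using hx

theorem intervalIntegrable_sin_nat_mul_div_sin (n : ℕ) (a b : ℝ) :
    IntervalIntegrable (fun x ↦ sin (n * x) / sin x) volume a b :=
  intervalIntegrable_const.mono_fun' (g := fun _ ↦ (n : ℝ))
    (Measurable.aestronglyMeasurable (by fun_prop))
    (ae_of_all _ fun x ↦ abs_sin_nat_mul_div_sin_le n x)

theorem integral_cos_nat_mul_two_pi {n : ℕ} (hn : n ≠ 0) :
    ∫ x in 0..2 * π, cos (n * x) = 0 := by
  have sin_eq_zero : sin (n * (2 * π)) = 0 := by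
    simpa [mul_assoc] using sin_nat_mul_pi (n * 2)
  rw [intervalIntegral.integral_comp_mul_left cos (Nat.cast_ne_zero.2 hn), integral_cos]
  simp [sin_eq_zero]

theorem integral_sin_nat_mul_div_sin (n : ℕ) :
    ∫ x in 0..2 * π, sin (n * x) / sin x = if Odd n then 2 * π else 0 := by
  induction n using Nat.twoStepInduction with
  | zero => simp
  | one =>
    have quotient_eq_one : ∀ᵐ x : ℝ, x ∈ uIoc 0 (2 * π) → sin ((1 : ℕ) * x) / sin x = 1 := by
      filter_upwards [ae_sin_ne_zero] with x hx _
      simp [hx]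
    rw [intervalIntegral.integral_congr_ae quotient_eq_one]
    simp
  | more n ih _ =>
    have recursion : ∀ᵐ x : ℝ, x ∈ uIoc 0 (2 * π) → sin ((n + 2 : ℕ) * x) / sin x =
        sin (n * x) / sin x + 2 * cos ((n + 1 : ℕ) * x) := by
      filter_upwards [ae_sin_ne_zero] with x hx _
      have succ_add : ((n + 2 : ℕ) : ℝ) * x = (n + 1 : ℕ) * x + x := by push_cast; ring
      have succ_sub : (n : ℝ) * x = (n + 1 : ℕ) * x - x := by push_cast; ring
      rw [succ_add, succ_sub, sin_add, sin_sub]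
      field_simp
      ring
    rw [intervalIntegral.integral_congr_ae recursion, intervalIntegral.integral_add
        (intervalIntegrable_sin_nat_mul_div_sin n _ _)
        (Continuous.intervalIntegrable (by fun_prop) _ _),
      intervalIntegral.integral_const_mul, integral_cos_nat_mul_two_pi n.succ_ne_zero, ih]
    simp [Nat.odd_add]

theorem integrableAtFilter_div_sin {f : ℝ → ℝ} (hf : AEStronglyMeasurable f)
    (hf' : DifferentiableAt ℝ f 0) (hf0 : f 0 = 0) :
    IntegrableAtFilter (fun x ↦ f x / sin x) (𝓝 0) := by
  have quotient_tendsto : Tendsto (fun x ↦ f x / sin x) (𝓝[≠] 0) (𝓝 (deriv f 0 / cos 0)) := by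
    refine (hf'.hasDerivAt.tendsto_slope.div (hasDerivAt_sin 0).tendsto_slope
      (by simp)).congr' ?_
    filter_upwards [self_mem_nhdsWithin] with x hx
    simp only [Pi.div_apply, slope_def_field, hf0, sin_zero, sub_zero]
    exact div_div_div_cancel_right₀ hx _ _
  refine (volume.finiteAt_nhds (0 : ℝ)).integrableAtFilter_of_tendsto_ae
    ⟨univ, univ_mem, (hf.div₀ continuous_sin.aestronglyMeasurable).restrict⟩
    (quotient_tendsto.mono_left (le_inf inf_le_left ?_))
  exact inf_le_right.trans (le_principal_iff.2 (compl_mem_ae_iff.2 (measure_singleton 0)))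

end Sine

section SineSeries

/-- The Fourier sine series with coefficients `b`, as a function on the line. The coefficient `b 0`
is irrelevant. -/
noncomputable def sineSeries (b : ℕ → ℝ) (x : ℝ) : ℝ := ∑' n : ℕ, b n * sin (n * x)

variable {b : ℕ → ℝ}

theorem hasSum_sineSeries (hb : Summable fun n : ℕ ↦ n * |b n|) (x : ℝ) :
    HasSum (fun n : ℕ ↦ b n * sin (n * x)) (sineSeries b x) :=
  (Summable.of_norm_bounded (hb.mul_right |sin x|) fun n ↦ abs_mul_sin_nat_mul_le (b n) n x).hasSum

theorem abs_sineSeries_le (hb : Summable fun n : ℕ ↦ n * |b n|) (x : ℝ) :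
    |sineSeries b x| ≤ (∑' n : ℕ, n * |b n|) * |sin x| :=
  tsum_of_norm_bounded (f := fun n : ℕ ↦ b n * sin (n * x)) (hb.hasSum.mul_right |sin x|)
    fun n ↦ abs_mul_sin_nat_mul_le (b n) n x

theorem continuous_sineSeries (hb : Summable fun n : ℕ ↦ n * |b n|) :
    Continuous (sineSeries b) :=
  continuous_tsum (fun n ↦ by fun_prop) hb fun n x ↦ (abs_mul_sin_nat_mul_le (b n) n x).trans <|
    mul_le_of_le_one_right (by positivity) (abs_sin_le_one x)

theorem integral_sineSeries_div_sin (hb : Summable fun n : ℕ ↦ n * |b n|) :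
    ∫ x in 0..2 * π, sineSeries b x / sin x = 2 * π * ∑' k : ℕ, b (2 * k + 1) := by
  have termwise : HasSum (fun n : ℕ ↦ b n * if Odd n then 2 * π else 0)
      (∫ x in 0..2 * π, sineSeries b x / sin x) := by
    simp only [← integral_sin_nat_mul_div_sin, ← intervalIntegral.integral_const_mul]
    refine intervalIntegral.hasSum_integral_of_dominated_convergence (fun n _ ↦ n * |b n|)
      (fun n ↦ Measurable.aestronglyMeasurable (by fun_prop))
      (fun n ↦ ae_of_all _ fun x _ ↦ ?_) (ae_of_all _ fun _ _ ↦ hb) intervalIntegrable_const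
      (ae_of_all _ fun x _ ↦ ?_)
    · rw [norm_mul, mul_comm (n : ℝ) |b n|]
      exact mul_le_mul_of_nonneg_left (abs_sin_nat_mul_div_sin_le n x) (abs_nonneg _)
    · simpa only [mul_div_assoc] using (hasSum_sineSeries hb x).div_const (sin x)
  have odd_injective : Injective fun k : ℕ ↦ 2 * k + 1 := fun k l h ↦ by simpa using h
  rw [← termwise.tsum_eq, ← odd_injective.tsum_eq, ← tsum_mul_left]
  · simp [mul_comm]
  · refine support_subset_iff'.2 fun n hn ↦ ?_
    have not_odd : ¬ Odd n := fun ⟨k, hk⟩ ↦ hn ⟨k, hk.symm⟩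
    simp [not_odd]

end SineSeries

section PrincipalValue

/-- The real line with the open `δ`-neighbourhoods of all multiples of `π` removed. In contrast to
the domain of integration in the principal value, the neighbourhood of `0` is removed too, which
makes the set periodic. -/
def awayFromPiMultiples (δ : ℝ) : Set ℝ := {p | ∀ m : ℤ, δ ≤ |p - π * m|}

variable {δ : ℝ} {f : ℝ → ℝ} {b : ℕ → ℝ}

theorem abs_sin_sub_pi_mul_int (p : ℝ) (m : ℤ) : |sin (p - π * m)| = |sin p| := by
  rw [mul_comm, sin_sub_int_mul_pi, abs_mul, abs_zpow]
  simp

theorem two_div_pi_mul_le_abs_sin {p : ℝ} (hp : p ∈ awayFromPiMultiples δ) :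
    2 / π * δ ≤ |sin p| := by
  set m : ℤ := round (p / π)
  have abs_sub_nearest : |p - π * m| ≤ π / 2 := by
    have factor : p - π * m = π * (p / π - m) := by field_simp
    rw [factor, abs_mul, abs_of_pos pi_pos]
    linarith [mul_le_mul_of_nonneg_left (abs_sub_round (p / π)) pi_pos.le]
  calc 2 / π * δ ≤ 2 / π * |p - π * m| := by gcongr; exact hp m
    _ ≤ |sin (p - π * m)| := mul_abs_le_abs_sin abs_sub_nearest
    _ = |sin p| := abs_sin_sub_pi_mul_int p m

theorem mem_awayFromPiMultiples_of_le_abs_sin {p : ℝ} (hp : δ ≤ |sin p|) :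
    p ∈ awayFromPiMultiples δ := fun m ↦
  hp.trans ((abs_sin_sub_pi_mul_int p m).symm.trans_le abs_sin_le_abs)

theorem isClosed_awayFromPiMultiples (δ : ℝ) : IsClosed (awayFromPiMultiples δ) := by
  simp only [awayFromPiMultiples, ofPred_forall]
  exact isClosed_iInter fun m ↦ isClosed_le continuous_const (by fun_prop)

theorem measurableSet_awayFromPiMultiples (δ : ℝ) : MeasurableSet (awayFromPiMultiples δ) :=
  (isClosed_awayFromPiMultiples δ).measurableSet

theorem add_int_mul_two_pi_mem_awayFromPiMultiples_iff {p : ℝ} (n : ℤ) :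
    p + n * (2 * π) ∈ awayFromPiMultiples δ ↔ p ∈ awayFromPiMultiples δ := by
  refine (Equiv.subRight (2 * n)).forall_congr fun m ↦ ?_
  have shift : p + n * (2 * π) - π * m = p - π * (m - 2 * n : ℤ) := by push_cast; ring
  rw [shift, Equiv.subRight_apply]

theorem integrableOn_div_sin_awayFromPiMultiples (hδ : 0 < δ) (hf : Integrable f) :
    IntegrableOn (fun x ↦ f x / sin x) (awayFromPiMultiples δ) := by
  simp only [div_eq_mul_inv]
  refine hf.integrableOn.mul_bdd (c := (2 / π * δ)⁻¹)
    (Measurable.aestronglyMeasurable (by fun_prop)) ?_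
  filter_upwards [ae_restrict_mem (measurableSet_awayFromPiMultiples δ)] with x hx
  rw [norm_inv]
  exact inv_anti₀ (by positivity) (two_div_pi_mul_le_abs_sin hx)

theorem setIntegral_div_sin_awayFromPiMultiples (hδ : 0 < δ) (hf : Integrable f) :
    ∫ x in awayFromPiMultiples δ, f x / sin x = ∫ x in 0..2 * π,
      (awayFromPiMultiples δ).indicator (fun x ↦ (∑' n : ℤ, f (x + n * (2 * π))) / sin x) x := by
  have hs := measurableSet_awayFromPiMultiples δ
  rw [← integral_indicator hs, integral_eq_intervalIntegral_tsum_add_int_mul two_pi_pos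
    ((integrableOn_div_sin_awayFromPiMultiples hδ hf).integrable_indicator hs)]
  classical
  refine intervalIntegral.integral_congr fun x _ ↦ ?_
  simp only [indicator_apply, add_int_mul_two_pi_mem_awayFromPiMultiples_iff,
    sin_add_int_mul_two_pi]
  split_ifs
  · exact tsum_div_const
  · exact tsum_zero

theorem tendsto_setIntegral_div_sin_awayFromPiMultiples (hf : Integrable f)
    (hb : Summable fun n : ℕ ↦ n * |b n|)
    (hfb : ∀ x, ∑' n : ℤ, f (x + n * (2 * π)) = sineSeries b x) :
    Tendsto (fun δ ↦ ∫ x in awayFromPiMultiples δ, f x / sin x) (𝓝[>] 0)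
      (𝓝 (2 * π * ∑' k : ℕ, b (2 * k + 1))) := by
  have unfolded : (fun δ ↦ ∫ x in 0..2 * π,
      (awayFromPiMultiples δ).indicator (fun x ↦ sineSeries b x / sin x) x) =ᶠ[𝓝[>] 0]
      fun δ ↦ ∫ x in awayFromPiMultiples δ, f x / sin x := by
    filter_upwards [self_mem_nhdsWithin] with δ hδ
    simp only [setIntegral_div_sin_awayFromPiMultiples hδ hf, hfb]
  rw [← integral_sineSeries_div_sin hb]
  refine Tendsto.congr' unfolded <|
    intervalIntegral.tendsto_integral_filter_of_dominated_convergence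
      (fun _ ↦ ∑' n : ℕ, n * |b n|) (Eventually.of_forall fun δ ↦ ?_)
      (Eventually.of_forall fun δ ↦ ae_of_all _ fun x _ ↦ ?_) intervalIntegrable_const ?_
  · have measurable_series := (continuous_sineSeries hb).measurable
    exact (Measurable.indicator (by fun_prop)
      (measurableSet_awayFromPiMultiples δ)).aestronglyMeasurable
  · refine (norm_indicator_le_norm_self _ x).trans ?_
    rw [norm_div]
    exact div_le_of_le_mul₀ (norm_nonneg _) (tsum_nonneg fun n ↦ by positivity)
      (abs_sineSeries_le hb x)
  · filter_upwards [ae_sin_ne_zero] with x hx _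
    refine tendsto_const_nhds.congr' ?_
    filter_upwards [Ioo_mem_nhdsGT (abs_pos.2 hx)] with δ hδ
    rw [indicator_of_mem (mem_awayFromPiMultiples_of_le_abs_sin hδ.2.le)]

theorem setOf_le_abs_sub_pi_mul_int_eq_union_ball (hδ : δ ≤ π / 2) :
    {p : ℝ | ∀ m : ℤ, m ≠ 0 → δ ≤ |p - π * m|} =
      awayFromPiMultiples δ ∪ Metric.ball 0 δ := by
  ext p
  rw [mem_union, mem_ball_zero_iff, Real.norm_eq_abs]
  refine ⟨fun h ↦ (le_or_gt δ |p|).imp_left fun hp m ↦ ?_, ?_⟩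
  · obtain rfl | hm := eq_or_ne m 0
    · simpa using hp
    · exact h m hm
  · rintro (h | hp) m hm
    · exact h m
    · have one_le : (1 : ℝ) ≤ |(m : ℝ)| := mod_cast Int.one_le_abs hm
      calc δ ≤ π * 1 - |p| := by linarith
        _ ≤ π * |(m : ℝ)| - |p| := by gcongr
        _ = |π * m| - |p| := by rw [abs_mul, abs_of_pos pi_pos]
        _ ≤ |p - π * m| := by rw [abs_sub_comm]; exact abs_sub_abs_le_abs_sub _ _

theorem setIntegral_div_sin_eq_add_ball (hδ : 0 < δ) (hδπ : δ ≤ π / 2) (hf : Integrable f)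
    (hf0 : IntegrableOn (fun x ↦ f x / sin x) (Metric.ball 0 δ)) :
    ∫ x in {p : ℝ | ∀ m : ℤ, m ≠ 0 → δ ≤ |p - π * m|}, f x / sin x =
      (∫ x in awayFromPiMultiples δ, f x / sin x) + ∫ x in Metric.ball 0 δ, f x / sin x := by
  rw [setOf_le_abs_sub_pi_mul_int_eq_union_ball hδπ]
  refine setIntegral_union ?_ measurableSet_ball
    (integrableOn_div_sin_awayFromPiMultiples hδ hf) hf0
  refine Set.disjoint_left.2 fun p hp hp0 ↦ ?_
  have le_abs : δ ≤ |p| := by simpa using hp 0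
  exact le_abs.not_gt (by simpa using hp0)

theorem tendsto_principalValue_div_sin (hf : Integrable f)
    (hf0 : IntegrableAtFilter (fun x ↦ f x / sin x) (𝓝 0))
    (hb : Summable fun n : ℕ ↦ n * |b n|)
    (hfb : ∀ x, ∑' n : ℤ, f (x + n * (2 * π)) = sineSeries b x) :
    Tendsto (fun δ ↦ ∫ x in {p : ℝ | ∀ m : ℤ, m ≠ 0 → δ ≤ |p - π * m|}, f x / sin x)
      (𝓝[>] 0) (𝓝 (2 * π * ∑' k : ℕ, b (2 * k + 1))) := by
  have periodic_add_origin := (tendsto_setIntegral_div_sin_awayFromPiMultiples hf hb hfb).add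
    (tendsto_setIntegral_ball_nhdsGT_zero hf0)
  rw [add_zero] at periodic_add_origin
  refine periodic_add_origin.congr' ?_
  obtain ⟨s, hs, hfs⟩ := hf0
  obtain ⟨r, hr, hrs⟩ := Metric.mem_nhds_iff.1 hs
  filter_upwards [Ioo_mem_nhdsGT hr, Ioo_mem_nhdsGT pi_div_two_pos] with δ hδr hδπ
  exact (setIntegral_div_sin_eq_add_ball hδr.1 hδπ.2.le hf
    (hfs.mono_set ((Metric.ball_subset_ball hδr.2.le).trans hrs))).symm

end PrincipalValue

section Gaussian

variable {t : ℝ}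

theorem summable_pow_mul_exp_neg_mul_nat_sq (k : ℕ) {c : ℝ} (hc : 0 < c) :
    Summable fun n : ℕ ↦ (n : ℝ) ^ k * exp (-c * n ^ 2) := by
  refine Summable.of_nonneg_of_le (fun n ↦ by positivity) (fun n ↦ ?_)
    (summable_pow_mul_exp_neg_nat_mul k hc)
  have le_sq : (n : ℝ) ≤ n ^ 2 := mod_cast Nat.le_self_pow two_ne_zero n
  gcongr ?_ * exp ?_
  exact mul_le_mul_of_nonpos_left le_sq (neg_nonpos.2 hc.le)

/-- The sine coefficients of the `2π`-periodisation of `p * exp (-t * p ^ 2)`, computed in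
`tsum_mul_exp_neg_mul_sq_add_int_mul_two_pi`. -/
noncomputable def gaussianSineCoeff (t : ℝ) (n : ℕ) : ℝ :=
  (4 * π) ^ (-(1 : ℝ) / 2) * t ^ (-(3 : ℝ) / 2) * (n * exp (-(n : ℝ) ^ 2 / (4 * t)))

theorem summable_pow_mul_gaussianSineCoeff (k : ℕ) (ht : 0 < t) :
    Summable fun n : ℕ ↦ (n : ℝ) ^ k * gaussianSineCoeff t n := by
  refine ((summable_pow_mul_exp_neg_mul_nat_sq (k + 1) (c := 1 / (4 * t)) (by positivity)).mul_left
    ((4 * π) ^ (-(1 : ℝ) / 2) * t ^ (-(3 : ℝ) / 2))).congr fun n ↦ ?_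
  have exponent : -(1 / (4 * t)) * (n : ℝ) ^ 2 = -(n : ℝ) ^ 2 / (4 * t) := by ring
  rw [exponent, gaussianSineCoeff]
  ring

theorem summable_nat_mul_abs_gaussianSineCoeff (ht : 0 < t) :
    Summable fun n : ℕ ↦ n * |gaussianSineCoeff t n| := by
  simpa [abs_mul] using (summable_pow_mul_gaussianSineCoeff 1 ht).abs

theorem summable_odd_mul_exp_neg_sq_div (ht : 0 < t) :
    Summable fun k : ℕ ↦ (2 * (k : ℝ) + 1) * exp (-(2 * (k : ℝ) + 1) ^ 2 / (4 * t)) := by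
  have odd_injective : Injective fun k : ℕ ↦ 2 * k + 1 := fun k l h ↦ by simpa using h
  refine ((summable_pow_mul_exp_neg_mul_nat_sq 1 (c := 1 / (4 * t))
    (by positivity)).comp_injective odd_injective).congr fun k ↦ ?_
  simp [div_eq_inv_mul]

theorem two_mul_two_pi_div_rpow_eq (ht : 0 < t) :
    2 * (2 * π) / (4 * π * t) ^ (3 / 2 : ℝ) =
      (4 * π) ^ (-(1 : ℝ) / 2) * t ^ (-(3 : ℝ) / 2) := by
  have exponent : (-(1 : ℝ) / 2) = 1 - 3 / 2 := by norm_num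
  rw [mul_rpow (by positivity) ht.le, exponent, rpow_sub (by positivity), rpow_one, neg_div,
    rpow_neg ht.le]
  field_simp
  ring

theorem tsum_mul_exp_neg_mul_sq_add_int_mul_two_pi (ht : 0 < t) (x : ℝ) :
    ∑' n : ℤ, (x + n * (2 * π)) * exp (-t * (x + n * (2 * π)) ^ 2) =
      sineSeries (gaussianSineCoeff t) x := by
  set u : ℝ := x / (2 * π)
  have x_eq : x = 2 * π * u := by simp only [u]; field_simp
  calc ∑' n : ℤ, (x + n * (2 * π)) * exp (-t * (x + n * (2 * π)) ^ 2)
      = ∑' n : ℤ, 2 * π * ((n + u) * exp (-π * (n + u) ^ 2 * (4 * π * t))) := by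
        refine tsum_congr fun n ↦ ?_
        rw [x_eq]
        ring_nf
    _ = 2 * π * oddKernel u (4 * π * t) := by
        rw [tsum_mul_left, (hasSum_int_oddKernel u (by positivity)).tsum_eq]
    _ = 2 * π * (1 / (4 * π * t) ^ (3 / 2 : ℝ) * sinKernel u (1 / (4 * π * t))) := by
        rw [oddKernel_functional_equation]
    _ = ∑' n : ℕ, 2 * π * (1 / (4 * π * t) ^ (3 / 2 : ℝ) *
          (2 * n * sin (2 * π * u * n) * exp (-π * n ^ 2 * (1 / (4 * π * t))))) := by
        rw [tsum_mul_left, tsum_mul_left, (hasSum_nat_sinKernel u (by positivity)).tsum_eq]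
    _ = sineSeries (gaussianSineCoeff t) x := by
        refine tsum_congr fun n ↦ ?_
        have exponent : -π * (n : ℝ) ^ 2 * (1 / (4 * π * t)) = -(n : ℝ) ^ 2 / (4 * t) := by
          field_simp
        rw [exponent, ← x_eq, gaussianSineCoeff, ← two_mul_two_pi_div_rpow_eq ht,
          mul_comm (n : ℝ) x]
        ring

end Gaussian

/-- The principal value integral
`(1/2π) p.v. ∫_ℝ (p/sin p) e^{−tp²} dp
  = (4π)^{−1/2} t^{−3/2} Σ_{k≥0} (2k+1) e^{−(2k+1)²/4t}`,
the principal value being the limit, as `δ → 0⁺`, of the integral over `ℝ` with the open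
intervals of radius `δ` around the singular points `πm`, `m ∈ ℤ \ {0}`, removed (at
`p = 0` the integrand has a removable singularity); the series on the right converges
absolutely. -/
theorem pv_inv_sin_integral (t : ℝ) (ht : 0 < t) :
    Summable (fun k : ℕ =>
      (2 * (k : ℝ) + 1) * Real.exp (-(2 * (k : ℝ) + 1) ^ 2 / (4 * t))) ∧
    Tendsto
      (fun δ : ℝ => (1 / (2 * Real.pi)) *
        ∫ p in {p : ℝ | ∀ m : ℤ, m ≠ 0 → δ ≤ |p - Real.pi * (m : ℝ)|},
          (p / Real.sin p) * Real.exp (-t * p ^ 2))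
      (𝓝[>] (0 : ℝ))
      (𝓝 ((4 * Real.pi) ^ (-(1 : ℝ) / 2) * t ^ (-(3 : ℝ) / 2) *
        ∑' k : ℕ, (2 * (k : ℝ) + 1) * Real.exp (-(2 * (k : ℝ) + 1) ^ 2 / (4 * t)))) := by
  refine ⟨summable_odd_mul_exp_neg_sq_div ht, ?_⟩
  have hf : Integrable fun p ↦ p * exp (-t * p ^ 2) := integrable_mul_exp_neg_mul_sq ht
  have near_origin : IntegrableAtFilter (fun p ↦ p * exp (-t * p ^ 2) / sin p) (𝓝 0) :=
    integrableAtFilter_div_sin hf.aestronglyMeasurable (by fun_prop) (zero_mul _)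
  have principal_value := (tendsto_principalValue_div_sin hf near_origin
    (summable_nat_mul_abs_gaussianSineCoeff ht)
    (tsum_mul_exp_neg_mul_sq_add_int_mul_two_pi ht)).const_mul (1 / (2 * π))
  rw [← mul_assoc, one_div_mul_cancel two_pi_pos.ne', one_mul] at principal_value
  simpa only [div_mul_eq_mul_div, gaussianSineCoeff, tsum_mul_left, Nat.cast_add, Nat.cast_mul,
    Nat.cast_ofNat, Nat.cast_one] using principal_value
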